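/- Let 0 ≤ b ≤ 1 and 0 ≤ c ≤ 1 with bc ≠ 1, and let N_{b,c} be the extremal qubit channel with Kraus operators K₀ = [[√((1+b)(1+c)/(2(1+bc))), 0],[0, √((1−b)(1+c)/(2(1−bc)))]] and K₁ = [[0, √((1+b)(1−c)/(2(1−bc)))],[√((1−b)(1−c)/(2(1+bc))), 0]]. Then the maximum entanglement fidelity O(N_{b,c}) = (1+c)(1−b²c)/(2(1−b²c²)). -/

import Mathlib

open Matrix
open scoped Kronecker ComplexOrder

/-- The maximally entangled unit vector `φ = (1/√d) Σ_a e_a ⊗ e_a`. -/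
noncomputable def maxEnt (n : Type*) [Fintype n] [DecidableEq n] : n × n → ℂ :=
  fun p => if p.1 = p.2 then ((1 / Real.sqrt (Fintype.card n) : ℝ) : ℂ) else 0

/-- The output `(id ⊗ N)(ρ) = Σ_i (I ⊗ K_i) ρ (I ⊗ K_i)†` of one half of `ρ`
through the channel with Kraus operators `K`. -/
noncomputable def chanOut {n : Type*} [Fintype n] [DecidableEq n] {ι : Type*} [Fintype ι]
    (K : ι → Matrix n n ℂ) (ρ : Matrix (n × n) (n × n) ℂ) : Matrix (n × n) (n × n) ℂ :=
  ∑ i, ((1 : Matrix n n ℂ) ⊗ₖ K i) * ρ * ((1 : Matrix n n ℂ) ⊗ₖ K i)ᴴ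

/-- The entanglement fidelity `⟨φ, ((id⊗N)(ρ)) φ⟩`. -/
noncomputable def fid {n : Type*} [Fintype n] [DecidableEq n] {ι : Type*} [Fintype ι]
    (K : ι → Matrix n n ℂ) (ρ : Matrix (n × n) (n × n) ℂ) : ℂ :=
  star (maxEnt n) ⬝ᵥ (chanOut K ρ *ᵥ maxEnt n)

/-- A density matrix: positive semidefinite with unit trace. -/
def IsDensity {m : Type*} [Fintype m] (ρ : Matrix m m ℂ) : Prop :=
  ρ.PosSemidef ∧ ρ.trace = 1

/-- The set of (real) entanglement fidelity values achievable with density-matrix inputs;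
its supremum is the maximum entanglement fidelity `O(N)`. -/
noncomputable def fidSet {n : Type*} [Fintype n] [DecidableEq n] {ι : Type*} [Fintype ι]
    (K : ι → Matrix n n ℂ) : Set ℝ :=
  {x : ℝ | ∃ ρ : Matrix (n × n) (n × n) ℂ, IsDensity ρ ∧ fid K ρ = (x : ℂ)}

lemma fid_expand (p q r s : ℝ) (ρ : Matrix (Fin 2 × Fin 2) (Fin 2 × Fin 2) ℂ) :
    fid ![!![(p : ℂ), 0; 0, (q : ℂ)], !![0, (r : ℂ); (s : ℂ), 0]] ρ =
      (1 / 2 : ℂ) * (p * p * ρ (0, 0) (0, 0) + p * q * ρ (0, 0) (1, 1) + q * p * ρ (1, 1) (0, 0)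
        + q * q * ρ (1, 1) (1, 1) + (r * r * ρ (0, 1) (0, 1) + r * s * ρ (0, 1) (1, 0)
        + s * r * ρ (1, 0) (0, 1) + s * s * ρ (1, 0) (1, 0))) := by
  have h2 : ((Real.sqrt 2 : ℝ) : ℂ)⁻¹ * ((Real.sqrt 2 : ℝ) : ℂ)⁻¹ = 1 / 2 := by
    rw [← mul_inv, ← Complex.ofReal_mul, Real.mul_self_sqrt (by norm_num)]
    norm_num
  rw [← h2]
  simp [fid, chanOut, maxEnt, dotProduct, mulVec, Matrix.mul_apply, Fintype.sum_prod_type,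
    Matrix.one_apply, Matrix.add_apply]
  ring

lemma psd_form {ρ : Matrix (Fin 2 × Fin 2) (Fin 2 × Fin 2) ℂ} (h : ρ.PosSemidef)
    (i j : Fin 2 × Fin 2) (hij : i ≠ j) (p q : ℝ) :
    0 ≤ ((p * p * ρ i i + p * q * ρ i j + q * p * ρ j i + q * q * ρ j j : ℂ)).re := by
  have := h.dotProduct_mulVec_nonneg (Pi.single i (p : ℂ) + Pi.single j (q : ℂ))
  have h3 := (Complex.le_def.1 this).1
  rw [Complex.zero_re] at h3
  refine h3.trans_eq ?_
  congr 1
  simp [mulVec_add, dotProduct_add, add_dotProduct, ← Pi.single_star]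
  ring

lemma sup_aux (p q r s : ℝ) (hle : r * r + s * s ≤ p * p + q * q) (hpos : 0 < p * p + q * q) :
    sSup (fidSet ![!![(p : ℂ), 0; 0, (q : ℂ)], !![0, (r : ℂ); (s : ℂ), 0]])
      = (p * p + q * q) / 2 := by
  refine IsGreatest.csSup_eq ⟨?_, ?_⟩
  · have hne : ((p : ℂ) * p + q * q) ≠ 0 := by exact_mod_cast hpos.ne'
    have hne2 : ((p : ℂ) ^ 2 + q ^ 2) ≠ 0 := by simpa [sq] using hne
    let v : Fin 2 × Fin 2 → ℂ := fun z => if z = (0, 0) then p else if z = (1, 1) then q else 0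
    refine ⟨((1 / (p * p + q * q) : ℝ) : ℂ) • vecMulVec v (star v), ⟨?_, ?_⟩, ?_⟩
    · refine (posSemidef_vecMulVec_self_star v).smul ?_
      have : (0 : ℝ) ≤ 1 / (p * p + q * q) := by positivity
      exact_mod_cast this
    · simp [Matrix.trace, Fintype.sum_prod_type, vecMulVec_apply, v]
      field_simp
    · rw [fid_expand]
      simp [vecMulVec_apply, v]
      field_simp
      ring
  · rintro x ⟨ρ, ⟨hρ, htr⟩, hx⟩
    rw [fid_expand] at hx
    have h1 := psd_form hρ (0, 0) (1, 1) (by decide) q (-p)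
    have h2 := psd_form hρ (0, 1) (1, 0) (by decide) s (-r)
    have d1 := (Complex.le_def.1 (hρ.diag_nonneg (i := (0, 1)))).1
    have d2 := (Complex.le_def.1 (hρ.diag_nonneg (i := (1, 0)))).1
    have ht := congrArg Complex.re htr
    have hx' := congrArg Complex.re hx
    simp [Matrix.trace, Fintype.sum_prod_type] at ht hx' h1 h2 d1 d2
    have m := mul_nonneg (sub_nonneg.2 hle) (add_nonneg d1 d2)
    have ht' := congrArg (fun t => (p * p + q * q) * t) ht
    ring_nf at ht' hx' h1 h2 m ⊢
    linarith

/-- For the extremal qubit channel `N_{b,c}` (with `0 ≤ b ≤ 1`,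
`0 ≤ c ≤ 1`, `bc ≠ 1`) given by the two Kraus operators below, the maximum entanglement
fidelity is `O(N_{b,c}) = (1+c)(1−b²c)/(2(1−b²c²))`. -/
theorem stmt_8 (b c : ℝ) (hb0 : 0 ≤ b) (hb1 : b ≤ 1) (hc0 : 0 ≤ c) (hc1 : c ≤ 1)
    (hbc : b * c ≠ 1)
    (K : Fin 2 → Matrix (Fin 2) (Fin 2) ℂ)
    (hK : K = ![!![(Real.sqrt ((1 + b) * (1 + c) / (2 * (1 + b * c))) : ℂ), 0;
                   0, (Real.sqrt ((1 - b) * (1 + c) / (2 * (1 - b * c))) : ℂ)],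
                !![0, (Real.sqrt ((1 + b) * (1 - c) / (2 * (1 - b * c))) : ℂ);
                   (Real.sqrt ((1 - b) * (1 - c) / (2 * (1 + b * c))) : ℂ), 0]]) :
    sSup (fidSet K) = (1 + c) * (1 - b ^ 2 * c) / (2 * (1 - b ^ 2 * c ^ 2)) := by
  have hbc1 : b * c ≤ 1 := mul_le_one₀ hb1 hc0 hc1
  have hlt : b * c < 1 := lt_of_le_of_ne hbc1 hbc
  have hnn : 0 ≤ b * c := mul_nonneg hb0 hc0
  have m1 : 0 < 1 - b * c := by linarith
  have m2 : 0 < 1 + b * c := by linarith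
  have hb' : 0 ≤ 1 - b := by linarith
  have hc' : 0 ≤ 1 - c := by linarith
  have hb2 : b ^ 2 * c ≤ b * c := by nlinarith
  have e0 : (1 - b ^ 2 * c ^ 2) = (1 - b * c) * (1 + b * c) := by ring
  have hD : 0 < 1 - b ^ 2 * c ^ 2 := by rw [e0]; positivity
  have hp := Real.mul_self_sqrt (show 0 ≤ (1 + b) * (1 + c) / (2 * (1 + b * c)) by positivity)
  have hq := Real.mul_self_sqrt (show 0 ≤ (1 - b) * (1 + c) / (2 * (1 - b * c)) by positivity)
  have hr := Real.mul_self_sqrt (show 0 ≤ (1 + b) * (1 - c) / (2 * (1 - b * c)) by positivity)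
  have hs := Real.mul_self_sqrt (show 0 ≤ (1 - b) * (1 - c) / (2 * (1 + b * c)) by positivity)
  have e1 : (1 + b) * (1 + c) / (2 * (1 + b * c)) + (1 - b) * (1 + c) / (2 * (1 - b * c))
      = (1 + c) * (1 - b ^ 2 * c) / (1 - b ^ 2 * c ^ 2) := by
    rw [e0]; field_simp; ring
  have e2 : (1 + b) * (1 - c) / (2 * (1 - b * c)) + (1 - b) * (1 - c) / (2 * (1 + b * c))
      = (1 - c) * (1 + b ^ 2 * c) / (1 - b ^ 2 * c ^ 2) := by
    rw [e0]; field_simp; ring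
  rw [hK, sup_aux, hp, hq, e1]
  · field_simp
  · rw [hp, hq, hr, hs, e1, e2]
    have : b ^ 2 * c ≤ c := mul_le_of_le_one_left hc0 (by nlinarith)
    gcongr ?_ / _
    nlinarith
  · rw [hp, hq, e1]
    have : 0 < 1 - b ^ 2 * c := by linarith
    positivity
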